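/- Let λ = (λ_2, λ_1) ∈ ℤ² with λ_2 ≥ λ_1 ≥ 0. Then the Kostka–Foulkes polynomial of type B_2 with second weight zero satisfies: (a) if λ_2 + λ_1 is even, K^{B_2}_{λ,0}(q) = q^{λ_2} · ( (q^{2λ_1+2} − 1)/(q² − 1) + q² · ((q^{2λ_1+1} − 1)/(q − 1)) · ((q^{λ_2−λ_1} − 1)/(q² − 1)) ); (b) if λ_2 + λ_1 is odd, K^{B_2}_{λ,0}(q) = q^{λ_2+1} · ((q^{2λ_1+1} − 1)/(q − 1)) · ((q^{λ_2−λ_1+1} − 1)/(q² − 1)). (Every displayed quotient is a polynomial: (q^{2a} − 1)/(q² − 1) = 1 + q² + … + q^{2a−2} and (q^{a} − 1)/(q − 1) = 1 + q + … + q^{a−1}; note λ_2 − λ_1 is even in case (a) and odd in case (b).) -/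

import Mathlib

open scoped BigOperators

noncomputable section

/-- The `q`-analogue of Kostant's partition function attached to the finite set `R`
of positive roots: the coefficient of `q^k` is the number of families
`(m_α)_{α ∈ R}` of nonnegative integers with `∑ m_α = k` and `∑ m_α • α = β`. -/
def kostantQ {n : ℕ} (R : Finset (Fin n → ℚ)) (β : Fin n → ℚ) : PowerSeries ℤ :=
  PowerSeries.mk fun k =>
    (Nat.card {m : {α // α ∈ R} → ℕ //
      (∑ α, m α) = k ∧ (∑ α, (m α : ℚ) • (α : Fin n → ℚ)) = β} : ℤ)

/-- Positive roots of type `D_n` : `e_i - e_j` and `e_i + e_j` for `j < i`. -/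
def rootsD (n : ℕ) : Finset (Fin n → ℚ) :=
  ((Finset.univ : Finset (Fin n × Fin n)).filter fun p => p.2 < p.1).image
      (fun p => Pi.single p.1 (1 : ℚ) - Pi.single p.2 1) ∪
  ((Finset.univ : Finset (Fin n × Fin n)).filter fun p => p.2 < p.1).image
      (fun p => Pi.single p.1 (1 : ℚ) + Pi.single p.2 1)

/-- Positive roots of type `B_n`. -/
def rootsB (n : ℕ) : Finset (Fin n → ℚ) :=
  rootsD n ∪ (Finset.univ : Finset (Fin n)).image fun i => Pi.single i (1 : ℚ)

/-- Positive roots of type `C_n`. -/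
def rootsC (n : ℕ) : Finset (Fin n → ℚ) :=
  rootsD n ∪ (Finset.univ : Finset (Fin n)).image fun i => Pi.single i (2 : ℚ)

/-- Positive roots of type `A_{n-1}` : `e_i - e_j` for `j < i`. -/
def rootsA (n : ℕ) : Finset (Fin n → ℚ) :=
  ((Finset.univ : Finset (Fin n × Fin n)).filter fun p => p.2 < p.1).image
      fun p => Pi.single p.1 (1 : ℚ) - Pi.single p.2 1

/-- `ρ` of type `B_n` : `e_i`-coordinate `i - 1/2` (`0`-based index `i ↦ i + 1/2`). -/
def rhoB (n : ℕ) : Fin n → ℚ := fun i => ((i : ℕ) : ℚ) + 1/2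

/-- `ρ` of type `C_n` : `e_i`-coordinate `i`. -/
def rhoC (n : ℕ) : Fin n → ℚ := fun i => ((i : ℕ) : ℚ) + 1

/-- `ρ` of type `D_n` : `e_i`-coordinate `i - 1`. -/
def rhoD (n : ℕ) : Fin n → ℚ := fun i => ((i : ℕ) : ℚ)

/-- `ρ` of type `A_{n-1}` : `e_i`-coordinate `i - 1`. -/
def rhoA (n : ℕ) : Fin n → ℚ := fun i => ((i : ℕ) : ℚ)

/-- The signed permutation `(σ, ε)` acting on a weight: it maps `e_j` to `± e_{σ j}`. -/
def wAct {n : ℕ} (σ : Equiv.Perm (Fin n)) (ε : Fin n → Bool) (β : Fin n → ℚ) :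
    Fin n → ℚ := fun i => (if ε i then -1 else 1) * β (σ⁻¹ i)

/-- The determinant (sign) of the signed permutation `(σ, ε)`. -/
def wDet {n : ℕ} (σ : Equiv.Perm (Fin n)) (ε : Fin n → Bool) : ℤ :=
  (Equiv.Perm.sign σ : ℤ) * ∏ i, (if ε i then (-1 : ℤ) else 1)

/-- Kostka-Foulkes polynomial of type `B_n`, as a power series in `q`. -/
def KB (n : ℕ) (lam mu : Fin n → ℚ) : PowerSeries ℤ :=
  ∑ σ : Equiv.Perm (Fin n), ∑ ε : Fin n → Bool,
    wDet σ ε • kostantQ (rootsB n) (wAct σ ε (lam + rhoB n) - (mu + rhoB n))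

/-- Kostka-Foulkes polynomial of type `C_n`, as a power series in `q`. -/
def KC (n : ℕ) (lam mu : Fin n → ℚ) : PowerSeries ℤ :=
  ∑ σ : Equiv.Perm (Fin n), ∑ ε : Fin n → Bool,
    wDet σ ε • kostantQ (rootsC n) (wAct σ ε (lam + rhoC n) - (mu + rhoC n))

/-- Kostka-Foulkes polynomial of type `D_n`, as a power series in `q` (the Weyl group
consists of the signed permutations with an even number of sign changes). -/
def KD (n : ℕ) (lam mu : Fin n → ℚ) : PowerSeries ℤ :=
  ∑ σ : Equiv.Perm (Fin n), ∑ ε : Fin n → Bool,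
    if (∏ i, (if ε i then (-1 : ℤ) else 1)) = 1 then
      wDet σ ε • kostantQ (rootsD n) (wAct σ ε (lam + rhoD n) - (mu + rhoD n))
    else 0

/-- Kostka-Foulkes polynomial of type `A_{n-1}`, as a power series in `q`. -/
def KA (n : ℕ) (lam mu : Fin n → ℚ) : PowerSeries ℤ :=
  ∑ σ : Equiv.Perm (Fin n),
    (Equiv.Perm.sign σ : ℤ) •
      kostantQ (rootsA n) ((fun i => (lam + rhoA n) (σ⁻¹ i)) - (mu + rhoA n))

/-- Dominant weight of type `B_n` : `λ_n ≥ ⋯ ≥ λ_1 ≥ 0`, all coordinates in `ℤ`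
or all in `ℤ + 1/2`. -/
def DominantB {n : ℕ} (lam : Fin n → ℚ) : Prop :=
  Monotone lam ∧ (∀ i, 0 ≤ lam i) ∧
    ((∀ i, ∃ z : ℤ, lam i = z) ∨ (∀ i, ∃ z : ℤ, lam i = z + 1/2))

/-- Dominant weight of type `C_n` : `λ_n ≥ ⋯ ≥ λ_1 ≥ 0`, integer coordinates. -/
def DominantC {n : ℕ} (lam : Fin n → ℚ) : Prop :=
  Monotone lam ∧ (∀ i, 0 ≤ lam i) ∧ ∀ i, ∃ z : ℤ, lam i = z

/-- Dominant weight of type `D_n` : `λ_n ≥ ⋯ ≥ λ_2 ≥ |λ_1|`, all coordinates in `ℤ`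
or all in `ℤ + 1/2`. -/
def DominantD {n : ℕ} (lam : Fin n → ℚ) : Prop :=
  (∀ i j : Fin n, i ≤ j → 0 < (i : ℕ) → lam i ≤ lam j) ∧
  (∀ h : 0 < n, ∀ j : Fin n, 0 < (j : ℕ) → |lam ⟨0, h⟩| ≤ lam j) ∧
  ((∀ i, ∃ z : ℤ, lam i = z) ∨ (∀ i, ∃ z : ℤ, lam i = z + 1/2))

/-- Restriction of a weight of rank `n` to the first `n - 1` coordinates
(i.e. forgetting the `e_n`-coordinate). -/
def restrict1 {n : ℕ} (lam : Fin n → ℚ) : Fin (n - 1) → ℚ :=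
  fun i => lam ⟨(i : ℕ), by have := i.2; omega⟩

/-- Pieri number `b^λ_{γ,r}` of type `B_n`. -/
def bPieri {m : ℕ} (γ lam : Fin m → ℚ) (r : ℕ) : ℕ :=
  Nat.card {t : (Fin m → ℕ) × (Fin m → ℕ) × Bool //
    ((cond t.2.2 1 0) + ∑ i, (t.1 i + t.2.1 i)) = r ∧
    (∀ i, ((t.2.1 i : ℚ) - (t.1 i : ℚ)) = lam i - γ i) ∧
    (∀ i : Fin m, ∀ h : (i : ℕ) + 1 < m,
      lam i ≤ lam ⟨(i : ℕ) + 1, h⟩ - (t.2.1 ⟨(i : ℕ) + 1, h⟩ : ℚ)) ∧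
    (∀ i : Fin m, ∀ h : (i : ℕ) + 1 < m,
      lam i + (t.1 i : ℚ) - (t.2.1 i : ℚ) ≤
        lam ⟨(i : ℕ) + 1, h⟩ - (t.2.1 ⟨(i : ℕ) + 1, h⟩ : ℚ)) ∧
    (∀ h : 0 < m,
      if t.2.2 then (0 : ℚ) < lam ⟨0, h⟩ - (t.2.1 ⟨0, h⟩ : ℚ)
      else (0 : ℚ) ≤ lam ⟨0, h⟩ - (t.2.1 ⟨0, h⟩ : ℚ))}

/-- Pieri number `c^λ_{γ,r}` of type `C_n`. -/
def cPieri {m : ℕ} (γ lam : Fin m → ℚ) (r : ℕ) : ℕ :=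
  Nat.card {t : (Fin m → ℕ) × (Fin m → ℕ) //
    (∑ i, (t.1 i + t.2 i)) = r ∧
    (∀ i, ((t.2 i : ℚ) - (t.1 i : ℚ)) = lam i - γ i) ∧
    (∀ i : Fin m, ∀ h : (i : ℕ) + 1 < m,
      lam i ≤ lam ⟨(i : ℕ) + 1, h⟩ - (t.2 ⟨(i : ℕ) + 1, h⟩ : ℚ)) ∧
    (∀ i : Fin m, ∀ h : (i : ℕ) + 1 < m,
      lam i + (t.1 i : ℚ) - (t.2 i : ℚ) ≤
        lam ⟨(i : ℕ) + 1, h⟩ - (t.2 ⟨(i : ℕ) + 1, h⟩ : ℚ)) ∧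
    (∀ h : 0 < m, (0 : ℚ) ≤ lam ⟨0, h⟩ - (t.2 ⟨0, h⟩ : ℚ))}

/-- Pieri number `d^λ_{γ,r}` of type `D_n`. -/
def dPieri {m : ℕ} (γ lam : Fin m → ℚ) (r : ℕ) : ℕ :=
  Nat.card {t : (Fin m → ℕ) × (Fin m → ℕ) //
    (∀ h : 0 < m, min (t.1 ⟨0, h⟩) (t.2 ⟨0, h⟩) = 0) ∧
    (∑ i, (t.1 i + t.2 i)) = r ∧
    (∀ i, ((t.2 i : ℚ) - (t.1 i : ℚ)) = lam i - γ i) ∧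
    (∀ h : 1 < m,
      (t.1 ⟨0, by omega⟩ = 0 →
        lam ⟨0, by omega⟩ ≤ lam ⟨1, h⟩ - (t.2 ⟨1, h⟩ : ℚ)) ∧
      (0 < t.1 ⟨0, by omega⟩ →
        -lam ⟨0, by omega⟩ ≤ lam ⟨1, h⟩ - (t.2 ⟨1, h⟩ : ℚ))) ∧
    (∀ i : Fin m, 1 ≤ (i : ℕ) → ∀ h : (i : ℕ) + 1 < m,
      lam i ≤ lam ⟨(i : ℕ) + 1, h⟩ - (t.2 ⟨(i : ℕ) + 1, h⟩ : ℚ)) ∧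
    (∀ i : Fin m, 1 ≤ (i : ℕ) → ∀ h : (i : ℕ) + 1 < m,
      lam i + (t.1 i : ℚ) - (t.2 i : ℚ) ≤
        lam ⟨(i : ℕ) + 1, h⟩ - (t.2 ⟨(i : ℕ) + 1, h⟩ : ℚ)) ∧
    (∀ h : 1 < m,
      (t.1 ⟨0, by omega⟩ = 0 → 0 ≤ γ ⟨0, by omega⟩ →
        lam ⟨0, by omega⟩ - (t.2 ⟨0, by omega⟩ : ℚ) ≤ lam ⟨1, h⟩ - (t.2 ⟨1, h⟩ : ℚ)) ∧
      (t.2 ⟨0, by omega⟩ = 0 → 0 ≤ γ ⟨0, by omega⟩ →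
        lam ⟨0, by omega⟩ + (t.1 ⟨0, by omega⟩ : ℚ) ≤ lam ⟨1, h⟩ - (t.2 ⟨1, h⟩ : ℚ)) ∧
      (t.2 ⟨0, by omega⟩ = 0 → γ ⟨0, by omega⟩ < 0 →
        -lam ⟨0, by omega⟩ - (t.1 ⟨0, by omega⟩ : ℚ) ≤ lam ⟨1, h⟩ - (t.2 ⟨1, h⟩ : ℚ)) ∧
      (t.1 ⟨0, by omega⟩ = 0 → γ ⟨0, by omega⟩ < 0 →
        -lam ⟨0, by omega⟩ + (t.2 ⟨0, by omega⟩ : ℚ) ≤ lam ⟨1, h⟩ - (t.2 ⟨1, h⟩ : ℚ)))}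

/-- The monomial `x^β = ∏ y_i ^ (2 β_i)` in the Laurent polynomial ring
`ℤ[y_1^{±1}, …, y_n^{±1}]`, realized as the group algebra of `ℤ^n`. -/
def xpow {n : ℕ} (β : Fin n → ℚ) : AddMonoidAlgebra ℤ (Fin n → ℤ) :=
  AddMonoidAlgebra.single (fun i => ⌊2 * β i⌋) 1

/-- The Weyl alternant `a_β = ∑_{σ ∈ W_{B_n}} det σ · x^{σ β}` of type `B_n`. -/
def altB {n : ℕ} (β : Fin n → ℚ) : AddMonoidAlgebra ℤ (Fin n → ℤ) :=
  ∑ σ : Equiv.Perm (Fin n), ∑ ε : Fin n → Bool, wDet σ ε • xpow (wAct σ ε β)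

/-- The Weyl alternant `a_β = ∑_{σ ∈ W_{D_n}} det σ · x^{σ β}` of type `D_n`. -/
def altD {n : ℕ} (β : Fin n → ℚ) : AddMonoidAlgebra ℤ (Fin n → ℤ) :=
  ∑ σ : Equiv.Perm (Fin n), ∑ ε : Fin n → Bool,
    if (∏ i, (if ε i then (-1 : ℤ) else 1)) = 1 then wDet σ ε • xpow (wAct σ ε β) else 0

end

/-!
Order the positive roots of `B₂` as `e₂ - e₁`, `e₂ + e₁`, `e₂` and `e₁`. The first three are the
weights of the three-dimensional representation `V` of the Levi subalgebra `so₃` whose positive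
root is `e₁`, so the coefficient of `q ^ (y + j)` in `P_q(x e₁ + y e₂)` is the multiplicity
`N_y(x - j)` of a weight in `Sym^y V`. Only three terms of the alternating sum over the Weyl group
survive, and they combine to `K_{λ,0} = q ^ a (S_b(a) - S_b(b - 1))` with
`S_b(y) = ∑ⱼ (N_y(b - j) - N_y(b + j + 1)) q ^ j`. Splitting off the top summand `V_y` of
`Sym^y V = V_y ⊕ Sym^(y - 2) V` gives
`S_b(y) = S_b(y - 2) + q ^ (y - b) (1 + q + ⋯ + q ^ (2 b))` for `b ≤ y`. This telescopes down to
`S_b(b - 1)` when `a + b` is odd and to `S_b(b)` when `a + b` is even.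
-/

open Finset PowerSeries

section KostantPartition

variable {n : ℕ}

lemma kostantQ_eq_zero_of_neg {R : Finset (Fin n → ℚ)} {β : Fin n → ℚ}
    (f : (Fin n → ℚ) →ₗ[ℚ] ℚ) (hR : ∀ α ∈ R, 0 ≤ f α) (hβ : f β < 0) : kostantQ R β = 0 := by
  ext k
  suffices h : ∀ m : {α // α ∈ R} → ℕ, ∑ α, (m α : ℚ) • (α : Fin n → ℚ) ≠ β by
    have : IsEmpty {m : {α // α ∈ R} → ℕ //
        ∑ α, m α = k ∧ ∑ α, (m α : ℚ) • (α : Fin n → ℚ) = β} := ⟨fun m ↦ h m.1 m.2.2⟩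
    rw [kostantQ, coeff_mk, Nat.card_of_isEmpty, Nat.cast_zero, map_zero]
  rintro m rfl
  refine hβ.not_ge ?_
  rw [map_sum]
  refine sum_nonneg fun α _ ↦ ?_
  rw [map_smul]
  exact smul_nonneg (Nat.cast_nonneg _) (hR α α.2)

lemma coeff_kostantQ_univ_map {ι : Type*} [Fintype ι] (v : ι ↪ (Fin n → ℚ)) (β : Fin n → ℚ)
    (k : ℕ) :
    coeff k (kostantQ (univ.map v) β) =
      Nat.card {m : ι → ℕ // ∑ i, m i = k ∧ ∑ i, (m i : ℚ) • v i = β} := by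
  let e : ι ≃ {α // α ∈ univ.map v} :=
    (Equiv.ofInjective v v.injective).trans (Equiv.subtypeEquivRight (by simp))
  rw [kostantQ, coeff_mk, Nat.cast_inj]
  refine Nat.card_congr ((e.symm.arrowCongr (Equiv.refl ℕ)).subtypeEquiv fun m ↦ ?_)
  rw [← e.sum_comp, ← e.sum_comp]
  rfl

end KostantPartition

/-- The positive roots `e₂ - e₁`, `e₂ + e₁`, `e₂`, `e₁` of type `B₂`, as an indexed family. The
first three are the weights of the nilradical for the Levi subalgebra with root `e₁`. -/
def rootB2 : Fin 4 ↪ (Fin 2 → ℚ) :=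
  ⟨![![-1, 1], ![1, 1], ![0, 1], ![1, 0]], by decide⟩

lemma rootsB_two : rootsB 2 = univ.map rootB2 := by
  have pairs : (univ : Finset (Fin 2 × Fin 2)).filter (fun p ↦ p.2 < p.1) = {(1, 0)} := by decide
  have single_zero : (Pi.single 0 1 : Fin 2 → ℚ) = ![1, 0] := by
    ext i; fin_cases i <;> rfl
  have single_one : (Pi.single 1 1 : Fin 2 → ℚ) = ![0, 1] := by
    ext i; fin_cases i <;> rfl
  have univ_eq : (univ : Finset (Fin 2)) = {0, 1} := by decide
  have sub_eq : (![0, 1] - ![1, 0] : Fin 2 → ℚ) = ![-1, 1] := by simp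
  have add_eq : (![0, 1] + ![1, 0] : Fin 2 → ℚ) = ![1, 1] := by simp
  simp only [rootsB, rootsD, pairs, univ_eq, image_singleton, image_insert, single_zero, single_one,
    sub_eq, add_eq]
  decide

/-- The multiplicity of the weight `z` in the `y`-th symmetric power of the three-dimensional
representation of `so₃`, whose weights are `-1`, `0`, `1`: the pair `p` records how often `-1` and
`1` are used, and `0` makes up the rest. It is `0` for `y < 0`. -/
noncomputable def symMult (y z : ℤ) : ℕ :=
  Nat.card {p : ℕ × ℕ // (p.2 : ℤ) - p.1 = z ∧ (p.1 : ℤ) + p.2 ≤ y}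

lemma symMult_eq (y z : ℤ) : symMult y z = ((y + 2 - |z|) / 2).toNat := by
  rw [symMult, ← Nat.card_fin ((y + 2 - |z|) / 2).toNat]
  symm
  refine Nat.card_eq_of_bijective
    (fun t ↦ ⟨(t + (-z).toNat, t + z.toNat), by grind, by grind⟩) ⟨?_, ?_⟩
  · intro s t h
    simpa [Fin.ext_iff] using h
  · rintro ⟨⟨m₁, m₂⟩, hz, hy⟩
    refine ⟨⟨min m₁ m₂, by grind⟩, ?_⟩
    grind

lemma symMult_eq_zero {y z : ℤ} (h : y < |z|) : symMult y z = 0 := by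
  rw [symMult_eq]
  omega

lemma symMult_neg (y z : ℤ) : symMult y (-z) = symMult y z := by
  rw [symMult_eq, symMult_eq, abs_neg]

lemma symMult_eq_symMult_sub_two_add (y z : ℤ) :
    symMult y z = symMult (y - 2) z + if |z| ≤ y then 1 else 0 := by
  rw [symMult_eq, symMult_eq]
  split_ifs <;> omega

lemma symMult_sub_symMult_sub_one (y z : ℤ) :
    (symMult y z - symMult (y - 1) z : ℤ) = if |z| ≤ y ∧ Even (y - z) then 1 else 0 := by
  rw [symMult_eq, symMult_eq]
  grind

lemma sum_smul_rootB2_eq_iff (m : Fin 4 → ℕ) (x y : ℤ) :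
    ∑ i, (m i : ℚ) • rootB2 i = ![(x : ℚ), (y : ℚ)] ↔
      (m 1 : ℤ) - m 0 + m 3 = x ∧ (m 0 : ℤ) + m 1 + m 2 = y := by
  have coord_iff (s t : ℤ) : s = t ↔ (s : ℚ) = t := Int.cast_inj.symm
  rw [funext_iff, Fin.forall_fin_two, coord_iff _ x, coord_iff _ y]
  simp only [Fin.sum_univ_four, rootB2, Function.Embedding.coeFn_mk, Matrix.cons_val,
    Pi.add_apply, Pi.smul_apply, smul_eq_mul]
  push_cast
  grind

lemma coeff_kostantQ_rootsB_two (x y : ℤ) (k : ℕ) :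
    coeff k (kostantQ (rootsB 2) ![(x : ℚ), (y : ℚ)]) =
      if y ≤ k then (symMult y (x + y - k) : ℤ) else 0 := by
  rw [rootsB_two, coeff_kostantQ_univ_map]
  simp only [sum_smul_rootB2_eq_iff]
  simp only [Fin.sum_univ_four]
  split_ifs with hk
  · refine congrArg _ <|
      Nat.card_eq_of_bijective (fun m ↦ ⟨(m.1 0, m.1 1), by grind, by grind⟩) ⟨?_, ?_⟩
    · rintro ⟨m, hm⟩ ⟨m', hm'⟩ h
      obtain ⟨h₀, h₁⟩ : m 0 = m' 0 ∧ m 1 = m' 1 := by simpa using h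
      ext i
      fin_cases i <;> simp only [Fin.zero_eta, Fin.mk_one, Fin.reduceFinMk] <;> omega
    · rintro ⟨⟨m₀, m₁⟩, hx, hy⟩
      refine ⟨⟨![m₀, m₁, (y - m₀ - m₁).toNat, (k - y).toNat], ?_⟩, rfl⟩
      simp only [Matrix.cons_val]
      grind
  · exact_mod_cast Nat.card_eq_zero.2 <| .inl ⟨by grind⟩

lemma sum_perm_fin_two {M : Type*} [AddCommMonoid M] (f : Equiv.Perm (Fin 2) → M) :
    ∑ σ, f σ = f 1 + f (Equiv.swap 0 1) := by
  have univ_eq : (univ : Finset (Equiv.Perm (Fin 2))) = {1, Equiv.swap 0 1} := by decide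
  rw [univ_eq, sum_pair (by decide)]

lemma sum_fin_two_arrow_bool {M : Type*} [AddCommMonoid M] (f : (Fin 2 → Bool) → M) :
    ∑ ε, f ε =
      f ![true, true] + f ![true, false] + (f ![false, true] + f ![false, false]) := by
  rw [← (finTwoArrowEquiv Bool).symm.sum_comp, Fintype.sum_prod_type, Fintype.sum_bool,
    Fintype.sum_bool, Fintype.sum_bool]
  rfl

lemma KB_two (lam mu : Fin 2 → ℚ) :
    KB 2 lam mu =
      kostantQ (rootsB 2) ![lam 0 - mu 0, lam 1 - mu 1]
      - kostantQ (rootsB 2) ![-lam 0 - 1 - mu 0, lam 1 - mu 1]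
      - kostantQ (rootsB 2) ![lam 0 - mu 0, -lam 1 - 3 - mu 1]
      + kostantQ (rootsB 2) ![-lam 0 - 1 - mu 0, -lam 1 - 3 - mu 1]
      - kostantQ (rootsB 2) ![lam 1 + 1 - mu 0, lam 0 - 1 - mu 1]
      + kostantQ (rootsB 2) ![-lam 1 - 2 - mu 0, lam 0 - 1 - mu 1]
      + kostantQ (rootsB 2) ![lam 1 + 1 - mu 0, -lam 0 - 2 - mu 1]
      - kostantQ (rootsB 2) ![-lam 1 - 2 - mu 0, -lam 0 - 2 - mu 1] := by
  have weight_eq (σ : Equiv.Perm (Fin 2)) (ε : Fin 2 → Bool) :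
      wAct σ ε (lam + rhoB 2) - (mu + rhoB 2) =
        ![wAct σ ε (lam + rhoB 2) 0 - mu 0 - 1 / 2, wAct σ ε (lam + rhoB 2) 1 - mu 1 - 3 / 2] := by
    ext i
    fin_cases i <;> simp only [rhoB, Fin.zero_eta, Fin.mk_one, Fin.val_zero, Fin.val_one,
      Matrix.cons_val, Pi.sub_apply, Pi.add_apply] <;> push_cast <;> ring
  simp only [KB, sum_perm_fin_two, sum_fin_two_arrow_bool, weight_eq, wDet, wAct, inv_one,
    Equiv.Perm.one_apply, Equiv.swap_inv, Equiv.swap_apply_left, Equiv.swap_apply_right]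
  simp only [rhoB, Equiv.Perm.sign_one, Equiv.Perm.sign_swap zero_ne_one, Fin.prod_univ_two,
    Matrix.cons_val, Pi.add_apply, Bool.false_eq_true, if_true, if_false, Fin.val_zero,
    Fin.val_one, Nat.cast_zero, Nat.cast_one, Units.val_one, Units.val_neg, one_mul, neg_mul,
    mul_neg, mul_one, neg_neg, one_smul, neg_smul]
  ring_nf

lemma kostantQ_rootsB_two_eq_zero_of_neg {x y : ℚ} (hy : y < 0) :
    kostantQ (rootsB 2) ![x, y] = 0 := by
  refine kostantQ_eq_zero_of_neg (.proj 1) ?_ (by simpa)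
  rw [rootsB_two, forall_mem_map]
  simp [rootB2, Fin.forall_fin_succ]

lemma kostantQ_rootsB_two_eq_zero_of_add_neg {x y : ℚ} (hxy : x + y < 0) :
    kostantQ (rootsB 2) ![x, y] = 0 := by
  refine kostantQ_eq_zero_of_neg (.proj 0 + .proj 1) ?_ (by simpa)
  rw [rootsB_two, forall_mem_map]
  simp [rootB2, Fin.forall_fin_succ]

lemma KB_two_zero {x y : ℚ} (hx : 0 ≤ x) (hxy : x ≤ y) :
    KB 2 ![x, y] 0 =
      kostantQ (rootsB 2) ![x, y] - kostantQ (rootsB 2) ![-x - 1, y]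
      - kostantQ (rootsB 2) ![y + 1, x - 1] := by
  rw [KB_two]
  simp only [Matrix.cons_val_zero, Matrix.cons_val_one, Pi.zero_apply, sub_zero]
  rw [kostantQ_rootsB_two_eq_zero_of_neg (y := -y - 3) (by linarith),
    kostantQ_rootsB_two_eq_zero_of_neg (y := -y - 3) (by linarith),
    kostantQ_rootsB_two_eq_zero_of_neg (y := -x - 2) (by linarith),
    kostantQ_rootsB_two_eq_zero_of_neg (y := -x - 2) (by linarith),
    kostantQ_rootsB_two_eq_zero_of_add_neg (x := -y - 2) (by linarith)]
  ring

lemma coeff_sum_X_pow_two_mul (R : Type*) [Semiring R] (n k : ℕ) :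
    coeff k (∑ t ∈ range n, (X : PowerSeries R) ^ (2 * t)) =
      if Even k ∧ k < 2 * n then 1 else 0 := by
  simp only [map_sum, coeff_X_pow]
  rcases Nat.even_or_odd' k with ⟨i, rfl | rfl⟩
  · simp
  · rw [sum_eq_zero fun t _ ↦ if_neg (by grind), if_neg (by grind)]

/-- The alternating sum `∑ⱼ (N_y(b - j) - N_y(b + j + 1)) q ^ j` of the weight multiplicities
`N_y = symMult y` over the Weyl group of the Levi subalgebra `so₃`: since `N_y` is even, the second
term is the first with `b` replaced by its image `-b - 1` under the dot action. -/
noncomputable def leviSeries (b y : ℤ) : PowerSeries ℤ :=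
  mk fun j ↦ symMult y (b - j) - symMult y (b + j + 1)

lemma KB_two_zero_eq_X_pow_mul_leviSeries {a b : ℕ} (hba : b ≤ a) :
    KB 2 ![(b : ℚ), (a : ℚ)] 0 = X ^ a * (leviSeries b a - leviSeries b (b - 1)) := by
  have coeff_first (k : ℕ) : coeff k (kostantQ (rootsB 2) ![(b : ℚ), (a : ℚ)]) =
      if a ≤ k then (symMult a (b - (k - a)) : ℤ) else 0 := by
    rw [sub_sub_eq_add_sub]
    exact_mod_cast coeff_kostantQ_rootsB_two b a k
  have coeff_second (k : ℕ) : coeff k (kostantQ (rootsB 2) ![-(b : ℚ) - 1, (a : ℚ)]) =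
      if a ≤ k then (symMult a (b + (k - a) + 1) : ℤ) else 0 := by
    rw [← symMult_neg]
    convert coeff_kostantQ_rootsB_two (-b - 1) a k using 2
    · push_cast; rfl
    · norm_cast
    · grind
  have coeff_third (k : ℕ) : coeff k (kostantQ (rootsB 2) ![(a : ℚ) + 1, (b : ℚ) - 1]) =
      if a ≤ k then (symMult (b - 1) (b - (k - a)) : ℤ) else 0 := by
    have h := coeff_kostantQ_rootsB_two (a + 1) (b - 1) k
    push_cast at h
    rw [h]
    split_ifs with hbk hak hak
    · congr 2
      ring
    · exact_mod_cast symMult_eq_zero (by grind)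
    · omega
    · rfl
  ext k
  rw [KB_two_zero b.cast_nonneg (by exact_mod_cast hba), map_sub, map_sub, coeff_first,
    coeff_second, coeff_third, coeff_X_pow_mul', map_sub, leviSeries, leviSeries, coeff_mk,
    coeff_mk]
  split_ifs with hk
  · have top_eq_zero : symMult (b - 1) (b + (k - a : ℕ) + 1) = 0 :=
      symMult_eq_zero (by grind)
    rw [top_eq_zero, Nat.cast_sub hk]
    ring
  · rfl

lemma leviSeries_eq_leviSeries_sub_two_add (b l : ℕ) :
    leviSeries b (b + l) = leviSeries b (b + l - 2) + X ^ l * ∑ t ∈ range (2 * b + 1), X ^ t := by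
  ext j
  simp only [leviSeries, symMult_eq_symMult_sub_two_add (b + l), Nat.cast_add, Nat.cast_ite,
    Nat.cast_one, Nat.cast_zero, coeff_mk, map_add, coeff_X_pow_mul', map_sum, coeff_X_pow,
    sum_ite_eq, mem_range]
  grind

lemma leviSeries_sub_two_add_two_mul (b l s : ℕ) :
    leviSeries b (b + l - 2 + 2 * s) = leviSeries b (b + l - 2) +
      X ^ l * (∑ t ∈ range (2 * b + 1), X ^ t) * ∑ t ∈ range s, X ^ (2 * t) := by
  induction s with
  | zero => simp
  | succ s ih =>
    have step := leviSeries_eq_leviSeries_sub_two_add b (l + 2 * s)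
    rw [show (b + (l + 2 * s : ℕ) - 2 : ℤ) = b + l - 2 + 2 * s by push_cast; ring, ih] at step
    rw [show (b + l - 2 + 2 * (s + 1 : ℕ) : ℤ) = b + (l + 2 * s : ℕ) by push_cast; ring, step,
      sum_range_succ _ s]
    ring

lemma leviSeries_self_sub (b : ℕ) :
    leviSeries b b - leviSeries b (b - 1) = ∑ t ∈ range (b + 1), X ^ (2 * t) := by
  have top_eq_zero {y : ℤ} (hy : y ≤ b) (j : ℕ) : symMult y (b + j + 1) = 0 :=
    symMult_eq_zero (by grind)
  ext j
  rw [map_sub, leviSeries, leviSeries, coeff_mk, coeff_mk, top_eq_zero le_rfl,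
    top_eq_zero (sub_one_lt _).le, coeff_sum_X_pow_two_mul, Nat.cast_zero, sub_zero, sub_zero,
    symMult_sub_symMult_sub_one]
  congr 1
  grind

/-- Explicit formula for `K^{B_2}_{λ,0}(q)` where `λ = (a, b)`,
`a ≥ b ≥ 0` (here the weight is written with `e_1`-coordinate `b` and
`e_2`-coordinate `a`).  Geometric sums realize the polynomial quotients:
`(q^{2s} - 1)/(q² - 1) = ∑_{t<s} q^{2t}` and `(q^s - 1)/(q - 1) = ∑_{t<s} q^t`. -/
theorem KB2_explicit (a b : ℕ) (hba : b ≤ a) :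
    (Even (a + b) →
      KB 2 ![(b : ℚ), (a : ℚ)] 0 =
        (PowerSeries.X : PowerSeries ℤ) ^ a *
          ((∑ t ∈ Finset.range (b + 1), (PowerSeries.X : PowerSeries ℤ) ^ (2 * t)) +
            (PowerSeries.X : PowerSeries ℤ) ^ 2 *
              (∑ t ∈ Finset.range (2 * b + 1), (PowerSeries.X : PowerSeries ℤ) ^ t) *
              (∑ t ∈ Finset.range ((a - b) / 2), (PowerSeries.X : PowerSeries ℤ) ^ (2 * t)))) ∧
    (Odd (a + b) →
      KB 2 ![(b : ℚ), (a : ℚ)] 0 =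
        (PowerSeries.X : PowerSeries ℤ) ^ (a + 1) *
          (∑ t ∈ Finset.range (2 * b + 1), (PowerSeries.X : PowerSeries ℤ) ^ t) *
          (∑ t ∈ Finset.range ((a - b + 1) / 2), (PowerSeries.X : PowerSeries ℤ) ^ (2 * t))) := by
  rw [KB_two_zero_eq_X_pow_mul_leviSeries hba]
  constructor
  · intro heven
    obtain ⟨s, rfl⟩ : ∃ s, a = b + 2 * s := ⟨(a - b) / 2, by grind⟩
    have telescope := leviSeries_sub_two_add_two_mul b 2 s
    have half : (b + 2 * s - b) / 2 = s := by omega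
    push_cast at telescope ⊢
    rw [half, ← leviSeries_self_sub]
    rw [add_sub_cancel_right] at telescope
    rw [telescope]
    ring
  · intro hodd
    obtain ⟨s, rfl⟩ : ∃ s, a = b + 2 * s + 1 := ⟨(a - b) / 2, by grind⟩
    have telescope := leviSeries_sub_two_add_two_mul b 1 (s + 1)
    have half : (b + 2 * s + 1 - b + 1) / 2 = s + 1 := by omega
    have target : (b + 1 - 2 + 2 * (s + 1) : ℤ) = b + 2 * s + 1 := by ring
    have source : (b + 1 - 2 : ℤ) = b - 1 := by ring
    push_cast at telescope ⊢
    rw [target, source, ← sub_eq_iff_eq_add'] at telescope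
    rw [half, telescope]
    ring
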